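/- Let A be a positive self-adjoint operator on L²(X,μ) with L(t) = ‖e^{-tA}Π_V‖_{1,∞} finite for V = L²(X)∩(ker A)^⊥ and M(t) = ∫_t^∞ L(u) du < ∞. Then every nonzero f ∈ V of finite energy E(f) satisfies ∫_X N(|f(x)|²/(4E(f))) dμ ≤ ln 2, where N(y) = y / M^{-1}(y) and M^{-1}(y) = inf{t : M(t) ≤ y}. -/

import Mathlib

open MeasureTheory Set
open scoped ENNReal InnerProductSpace

variable {X : Type*} [MeasurableSpace X]

/-- The `L¹ → L^∞` operator norm of an operator on `L²`, computed on `L¹ ∩ L²`. -/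
noncomputable def opNorm1infty (μ : Measure X) (T : Lp ℝ 2 μ →L[ℝ] Lp ℝ 2 μ) : ℝ≥0∞ :=
  ⨆ (f : Lp ℝ 2 μ) (_ : eLpNorm (⇑f) 1 μ ≤ 1), eLpNorm (⇑(T f)) ⊤ μ

section Semigroup

variable {H : Type*} [NormedAddCommGroup H] [InnerProductSpace ℝ H]

theorem inner_sub_map_sq_le {B : H →L[ℝ] H} (hsymm : ∀ f g, ⟪B f, g⟫_ℝ = ⟪f, B g⟫_ℝ)
    (hle : ∀ g, ⟪B g, g⟫_ℝ ≤ ‖g‖ ^ 2) (f g : H) :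
    ⟪f, g - B g⟫_ℝ ^ 2 ≤ ⟪f, f - B f⟫_ℝ * ⟪g, g - B g⟫_ℝ := by
  have key : ∀ x : ℝ, 0 ≤ ⟪g, g - B g⟫_ℝ * (x * x) + 2 * ⟪f, g - B g⟫_ℝ * x
      + ⟪f, f - B f⟫_ℝ := by
    intro x
    have h := hle (f + x • g)
    have h1 := hsymm f g
    have h2 := hsymm g f
    rw [← real_inner_self_eq_norm_sq] at h
    simp only [map_add, map_smul, inner_add_left, inner_add_right, inner_smul_left,
      inner_smul_right, inner_sub_right, RCLike.conj_to_real] at h ⊢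
    have h3 := hsymm f f
    have h4 := hsymm g g
    have h5 := real_inner_comm f g
    rw [h1, h2, h3, h4] at h
    have h6 : ⟪g, B f⟫_ℝ = ⟪f, B g⟫_ℝ := by rw [← hsymm, real_inner_comm]
    rw [h6] at h
    rw [h5] at h
    linarith
  have := discrim_le_zero key
  rw [discrim] at this
  linarith

variable {T : ℝ → H →L[ℝ] H}

theorem inner_map_map (hsemi : ∀ s t, 0 < s → 0 < t → T s ∘L T t = T (s + t))
    (hsymm : ∀ t f g, ⟪T t f, g⟫_ℝ = ⟪f, T t g⟫_ℝ) {s t : ℝ} (hs : 0 < s) (ht : 0 < t) (f g : H) :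
    ⟪T s f, T t g⟫_ℝ = ⟪T (s + t) f, g⟫_ℝ := by
  rw [hsymm (s + t), ← hsemi s t hs ht, hsymm]
  rfl

theorem norm_map_sq (hsemi : ∀ s t, 0 < s → 0 < t → T s ∘L T t = T (s + t))
    (hsymm : ∀ t f g, ⟪T t f, g⟫_ℝ = ⟪f, T t g⟫_ℝ) {t : ℝ} (ht : 0 < t) (g : H) :
    ‖T t g‖ ^ 2 = ⟪T (t + t) g, g⟫_ℝ := by
  rw [← real_inner_self_eq_norm_sq, inner_map_map hsemi hsymm ht ht]

theorem inner_map_self_nonneg (hsemi : ∀ s t, 0 < s → 0 < t → T s ∘L T t = T (s + t))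
    (hsymm : ∀ t f g, ⟪T t f, g⟫_ℝ = ⟪f, T t g⟫_ℝ) {t : ℝ} (ht : 0 < t) (g : H) :
    0 ≤ ⟪T t g, g⟫_ℝ := by
  have := norm_map_sq hsemi hsymm (half_pos ht) g
  rw [add_halves] at this
  rw [← this]
  positivity

theorem inner_map_self_le (hsemi : ∀ s t, 0 < s → 0 < t → T s ∘L T t = T (s + t))
    (hsymm : ∀ t f g, ⟪T t f, g⟫_ℝ = ⟪f, T t g⟫_ℝ)
    (hanti : ∀ g, AntitoneOn (fun t => ⟪T t g, g⟫_ℝ) (Ioi 0)) {t : ℝ} (ht : 0 < t) (g : H) :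
    ⟪T t g, g⟫_ℝ ≤ ‖g‖ ^ 2 := by
  have h1 := norm_map_sq hsemi hsymm ht g
  have h2 : ⟪T (t + t) g, g⟫_ℝ ≤ ⟪T t g, g⟫_ℝ :=
    hanti g (mem_Ioi.2 ht) (mem_Ioi.2 (by linarith)) (by linarith)
  have h3 := real_inner_le_norm (T t g) g
  nlinarith [norm_nonneg g, norm_nonneg (T t g)]

theorem inner_map_sub_map_sq_le (hsemi : ∀ s t, 0 < s → 0 < t → T s ∘L T t = T (s + t))
    (hsymm : ∀ t f g, ⟪T t f, g⟫_ℝ = ⟪f, T t g⟫_ℝ)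
    (hanti : ∀ g, AntitoneOn (fun t => ⟪T t g, g⟫_ℝ) (Ioi 0)) {t ε : ℝ} (ht : 0 < t) (hε : 0 < ε)
    (n : ℕ) (f h : H) :
    (⟪f, T t h⟫_ℝ - ⟪f, T (t + n * ε) h⟫_ℝ) ^ 2
      ≤ ⟪f, f - T ε f⟫_ℝ * ∑ k ∈ Finset.range n, ⟪T (2 * t + k * ε) h, h⟫_ℝ := by
  set R : H := ∑ k ∈ Finset.range n, T (t + k * ε) h with hR
  have hpos : ∀ k : ℕ, 0 < t + k * ε := fun k => by positivity
  have htel : R - T ε R = T t h - T (t + n * ε) h := by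
    have h1 : T ε R = ∑ k ∈ Finset.range n, T (t + (k + 1 : ℕ) * ε) h := by
      rw [hR, map_sum]
      refine Finset.sum_congr rfl fun k _ => ?_
      have h2 := congrArg (fun S : H →L[ℝ] H => S h) (hsemi ε (t + k * ε) hε (hpos k))
      simp only [ContinuousLinearMap.comp_apply] at h2
      rw [h2]
      congr 2
      push_cast
      ring
    rw [h1, hR, ← Finset.sum_sub_distrib,
      Finset.sum_range_sub' (fun k : ℕ => T (t + k * ε) h)]
    simp
  have hle := inner_sub_map_sq_le (hsymm ε) (inner_map_self_le hsemi hsymm hanti hε) f R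
  have hff : 0 ≤ ⟪f, f - T ε f⟫_ℝ := by
    have := inner_map_self_le hsemi hsymm hanti hε f
    rw [inner_sub_right, real_inner_self_eq_norm_sq, ← hsymm]
    linarith
  have hRR : ⟪R, R - T ε R⟫_ℝ ≤ ∑ k ∈ Finset.range n, ⟪T (2 * t + k * ε) h, h⟫_ℝ := by
    rw [htel, hR, sum_inner]
    refine Finset.sum_le_sum fun k _ => ?_
    rw [inner_sub_right, inner_map_map hsemi hsymm (hpos k) ht,
      inner_map_map hsemi hsymm (hpos k) (hpos n)]
    have := inner_map_self_nonneg hsemi hsymm (add_pos (hpos k) (hpos n)) h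
    rw [show t + k * ε + t = 2 * t + k * ε by ring]
    linarith
  rw [htel] at hle hRR
  rw [inner_sub_right (x := f) (y := T t h)] at hle
  exact hle.trans (mul_le_mul_of_nonneg_left hRR hff)

theorem sum_mul_le_integral_Ioi {φ Λ : ℝ → ℝ} {a ε : ℝ} (hε : 0 < ε) (ha : 0 < a)
    (hφ : AntitoneOn φ (Ioi 0)) (hφ0 : ∀ s, 0 < s → 0 ≤ φ s) (hφΛ : ∀ s, 0 < s → φ s ≤ Λ s)
    (hΛ : IntegrableOn Λ (Ioi a)) (n : ℕ) :
    ε * ∑ k ∈ Finset.range n, φ (a + k * ε) ≤ ε * φ a + ∫ s in Ioi a, Λ s := by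
  have hsub : ∀ b : ℝ, Icc a b ⊆ Ioi 0 := fun b x hx => lt_of_lt_of_le ha hx.1
  have hI : ∀ b, a ≤ b → ∫ s in a..b, φ s ≤ ∫ s in Ioi a, Λ s := by
    intro b hb
    have h1 : ∫ s in a..b, φ s ≤ ∫ s in a..b, Λ s := by
      refine intervalIntegral.integral_mono_on hb ?_ ?_ fun x hx => hφΛ x (hsub b hx)
      · exact (hφ.mono (by rw [uIcc_of_le hb]; exact hsub b)).intervalIntegrable
      · exact (intervalIntegrable_iff_integrableOn_Ioc_of_le hb).2
          (hΛ.mono_set Ioc_subset_Ioi_self)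
    refine h1.trans ?_
    rw [intervalIntegral.integral_of_le hb]
    refine setIntegral_mono_set hΛ ?_ (Ioc_subset_Ioi_self.eventuallyLE)
    filter_upwards [ae_restrict_mem measurableSet_Ioi] with x hx
    have hx0 : 0 < x := ha.trans hx
    exact (hφ0 x hx0).trans (hφΛ x hx0)
  have hsum : ε * ∑ k ∈ Finset.range n, φ (a + (k + 1 : ℕ) * ε) ≤ ∫ s in Ioi a, Λ s := by
    have h1 : AntitoneOn (fun x => φ (a + ε * x)) (Icc 0 (0 + (n : ℝ))) := by
      intro x hx y hy hxy
      have hx0 : 0 ≤ ε * x := mul_nonneg hε.le hx.1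
      have hy0 : 0 ≤ ε * y := mul_nonneg hε.le hy.1
      exact hφ (mem_Ioi.2 (by linarith)) (mem_Ioi.2 (by linarith)) (by gcongr)
    have h2 := h1.sum_le_integral
    rw [intervalIntegral.integral_comp_add_mul φ hε.ne' a, smul_eq_mul] at h2
    simp only [zero_add, mul_zero, add_zero] at h2
    have h3 := mul_le_mul_of_nonneg_left h2 hε.le
    rw [mul_inv_cancel_left₀ hε.ne'] at h3
    simp only [mul_comm ε ((_ : ℕ) : ℝ)] at h3
    exact h3.trans (hI _ (by have : 0 ≤ (n : ℝ) * ε := by positivity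
                             linarith))
  rcases n with _ | n
  · have := hI a le_rfl
    simp only [intervalIntegral.integral_same] at this
    simp only [Finset.range_zero, Finset.sum_empty, mul_zero]
    have := mul_nonneg hε.le (hφ0 a ha)
    linarith
  · rw [Finset.sum_range_succ]
    rw [Finset.sum_range_succ] at hsum
    have h0 : 0 < a + (n + 1 : ℕ) * ε := by positivity
    have h4 := hφ0 _ h0
    rw [← Finset.sum_range_succ, Finset.sum_range_succ', mul_add]
    simp only [Nat.cast_zero, zero_mul, add_zero]
    have h5 := mul_nonneg hε.le h4
    rw [mul_add] at hsum
    linarith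

theorem inner_map_sq_le_energy_mul_integral
    (hsemi : ∀ s t, 0 < s → 0 < t → T s ∘L T t = T (s + t))
    (hsymm : ∀ t f g, ⟪T t f, g⟫_ℝ = ⟪f, T t g⟫_ℝ)
    (hanti : ∀ g, AntitoneOn (fun t => ⟪T t g, g⟫_ℝ) (Ioi 0)) {f h : H} {E : ℝ} (hE0 : 0 ≤ E)
    (hE : ∀ ε, 0 < ε → ⟪f, f - T ε f⟫_ℝ ≤ ε * E) {Λ : ℝ → ℝ}
    (hΛ : ∀ s, 0 < s → ⟪T s h, h⟫_ℝ ≤ Λ s) {t : ℝ} (ht : 0 < t)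
    (hint : IntegrableOn Λ (Ioi (2 * t))) :
    ⟪f, T t h⟫_ℝ ^ 2 ≤ E * ∫ s in Ioi (2 * t), Λ s := by
  set I := ∫ s in Ioi (2 * t), Λ s with hI
  have h2t : 0 < 2 * t := by positivity
  have hsum : ∀ ε, 0 < ε → ∀ n : ℕ, ε * ∑ k ∈ Finset.range n, ⟪T (2 * t + k * ε) h, h⟫_ℝ
      ≤ ε * ⟪T (2 * t) h, h⟫_ℝ + I := fun ε hε n =>
    sum_mul_le_integral_Ioi hε h2t (hanti h) (fun s hs => inner_map_self_nonneg hsemi hsymm hs h)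
      hΛ hint n
  have hfin : ∀ ε, 0 < ε → ∀ n : ℕ, (⟪f, T t h⟫_ℝ - ⟪f, T (t + n * ε) h⟫_ℝ) ^ 2
      ≤ E * (ε * ⟪T (2 * t) h, h⟫_ℝ + I) := by
    intro ε hε n
    refine (inner_map_sub_map_sq_le hsemi hsymm hanti ht hε n f h).trans ?_
    have h0 : 0 ≤ ∑ k ∈ Finset.range n, ⟪T (2 * t + k * ε) h, h⟫_ℝ :=
      Finset.sum_nonneg fun k _ => inner_map_self_nonneg hsemi hsymm (by positivity) h
    calc _ ≤ ε * E * ∑ k ∈ Finset.range n, ⟪T (2 * t + k * ε) h, h⟫_ℝ :=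
          mul_le_mul_of_nonneg_right (hE ε hε) h0
      _ = E * (ε * ∑ k ∈ Finset.range n, ⟪T (2 * t + k * ε) h, h⟫_ℝ) := by ring
      _ ≤ _ := mul_le_mul_of_nonneg_left (hsum ε hε n) hE0
  -- decay of the semigroup, from the summability of its diagonal coefficients
  have hdecay : Filter.Tendsto (fun m : ℕ => ⟪f, T (t + m) h⟫_ℝ) Filter.atTop (nhds 0) := by
    have hb : ∀ m : ℕ, ‖T (t + m) h‖ ^ 2 ≤ (⟪T (2 * t) h, h⟫_ℝ + I) * (1 / ((m : ℝ) + 1)) := by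
      intro m
      have h1 := hsum 1 one_pos (m + 1)
      have h2 : ((m + 1 : ℕ) : ℝ) * ⟪T (t + m + (t + m)) h, h⟫_ℝ
          ≤ ∑ k ∈ Finset.range (m + 1), ⟪T (2 * t + k * 1) h, h⟫_ℝ := by
        rw [← nsmul_eq_mul]
        have h3 := Finset.card_nsmul_le_sum (Finset.range (m + 1))
          (fun k : ℕ => ⟪T (2 * t + k * 1) h, h⟫_ℝ) (⟪T (t + m + (t + m)) h, h⟫_ℝ) fun k hk => by
            have hkm : (k : ℝ) ≤ m := by exact_mod_cast Nat.lt_succ_iff.1 (Finset.mem_range.1 hk)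
            have hk0 : (0 : ℝ) ≤ k := by positivity
            exact hanti h (mem_Ioi.2 (by linarith)) (mem_Ioi.2 (by linarith)) (by linarith)
        simpa using h3
      rw [norm_map_sq hsemi hsymm (by positivity) h, mul_one_div, le_div_iff₀ (by positivity)]
      push_cast at h2
      linarith
    have hb0 : Filter.Tendsto (fun m : ℕ => ‖T (t + m) h‖ ^ 2) Filter.atTop (nhds 0) := by
      refine squeeze_zero (fun m => by positivity) hb ?_
      have := (tendsto_one_div_add_atTop_nhds_zero_nat (𝕜 := ℝ)).const_mul
        (⟪T (2 * t) h, h⟫_ℝ + I)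
      simpa using this
    have hb1 : Filter.Tendsto (fun m : ℕ => ‖T (t + m) h‖) Filter.atTop (nhds 0) := by
      have := hb0.sqrt
      simpa [Real.sqrt_sq (norm_nonneg _)] using this
    refine squeeze_zero_norm (a := fun m : ℕ => ‖f‖ * ‖T (t + m) h‖)
      (fun m => norm_inner_le_norm _ _) ?_
    simpa using hb1.const_mul ‖f‖
  have hlim1 : Filter.Tendsto (fun m : ℕ => (⟪f, T t h⟫_ℝ - ⟪f, T (t + (m + 1 : ℕ)) h⟫_ℝ) ^ 2)
      Filter.atTop (nhds (⟪f, T t h⟫_ℝ ^ 2)) := by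
    have := ((hdecay.comp (Filter.tendsto_add_atTop_nat 1)).const_sub ⟪f, T t h⟫_ℝ).pow 2
    simpa using this
  have hlim2 : Filter.Tendsto
      (fun m : ℕ => E * (1 / ((m : ℝ) + 1) * ⟪T (2 * t) h, h⟫_ℝ + I)) Filter.atTop
      (nhds (E * I)) := by
    have := (((tendsto_one_div_add_atTop_nhds_zero_nat (𝕜 := ℝ)).mul_const
      ⟪T (2 * t) h, h⟫_ℝ).add_const I).const_mul E
    simpa using this
  refine le_of_tendsto_of_tendsto' hlim1 hlim2 fun m => ?_
  have := hfin (1 / ((m : ℝ) + 1)) (by positivity) ((m + 1) ^ 2)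
  have he : (((m + 1) ^ 2 : ℕ) : ℝ) * (1 / ((m : ℝ) + 1)) = (m + 1 : ℕ) := by
    push_cast
    field_simp
  rwa [he] at this

end Semigroup

section Integral

theorem integral_mul_exp_neg_mul {a : ℝ} (ha : 0 < a) :
    ∫ c in (0 : ℝ)..1, c * Real.exp (-(a * c))
      = 1 / a ^ 2 - (1 / a + 1 / a ^ 2) * Real.exp (-a) := by
  have hd : ∀ c ∈ uIcc (0 : ℝ) 1, HasDerivAt
      (fun c => -(c / a + 1 / a ^ 2) * Real.exp (-(a * c))) (c * Real.exp (-(a * c))) c := by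
    intro c _
    have h1 : HasDerivAt (fun c : ℝ => -(c / a + 1 / a ^ 2)) (-(1 / a)) c :=
      (((hasDerivAt_id c).div_const a).add_const _).neg
    have h2 : HasDerivAt (fun c : ℝ => Real.exp (-(a * c))) (Real.exp (-(a * c)) * -(a * 1)) c :=
      (((hasDerivAt_id c).const_mul a).neg).exp
    refine (h1.mul h2).congr_deriv ?_
    field_simp
    ring
  rw [intervalIntegral.integral_eq_sub_of_hasDerivAt hd
    (Continuous.intervalIntegrable (by fun_prop) _ _)]
  simp
  ring

theorem integral_two_sub_mul_exp_neg_mul {a : ℝ} (ha : 0 < a) :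
    ∫ c in (1 : ℝ)..2, (2 - c) * Real.exp (-(a * c))
      = 1 / a ^ 2 * Real.exp (-(2 * a)) - (-(1 / a) + 1 / a ^ 2) * Real.exp (-a) := by
  have hd : ∀ c ∈ uIcc (1 : ℝ) 2, HasDerivAt
      (fun c => (-((2 - c) / a) + 1 / a ^ 2) * Real.exp (-(a * c)))
      ((2 - c) * Real.exp (-(a * c))) c := by
    intro c _
    have h1 : HasDerivAt (fun c : ℝ => -((2 - c) / a) + 1 / a ^ 2) (-(-1 / a)) c :=
      (((hasDerivAt_id c).const_sub 2).div_const a).neg.add_const _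
    have h2 : HasDerivAt (fun c : ℝ => Real.exp (-(a * c))) (Real.exp (-(a * c)) * -(a * 1)) c :=
      (((hasDerivAt_id c).const_mul a).neg).exp
    refine (h1.mul h2).congr_deriv ?_
    field_simp
    ring
  rw [intervalIntegral.integral_eq_sub_of_hasDerivAt hd
    (Continuous.intervalIntegrable (by fun_prop) _ _)]
  norm_num [mul_comm a 2]

theorem integral_min_mul_exp_neg_mul {a : ℝ} (ha : 0 < a) :
    ∫ c in (0 : ℝ)..2, min c (2 - c) * Real.exp (-(a * c)) = (1 - Real.exp (-a)) ^ 2 / a ^ 2 := by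
  have hi : ∀ u v : ℝ, IntervalIntegrable (fun c : ℝ => min c (2 - c) * Real.exp (-(a * c)))
      volume u v := fun u v => Continuous.intervalIntegrable (by fun_prop) _ _
  rw [← intervalIntegral.integral_add_adjacent_intervals (hi 0 1) (hi 1 2)]
  have h1 : ∫ c in (0 : ℝ)..1, min c (2 - c) * Real.exp (-(a * c))
      = ∫ c in (0 : ℝ)..1, c * Real.exp (-(a * c)) := by
    refine intervalIntegral.integral_congr fun c hc => ?_
    rw [uIcc_of_le zero_le_one] at hc
    simp only [min_eq_left (show c ≤ 2 - c by linarith [hc.2])]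
  have h2 : ∫ c in (1 : ℝ)..2, min c (2 - c) * Real.exp (-(a * c))
      = ∫ c in (1 : ℝ)..2, (2 - c) * Real.exp (-(a * c)) := by
    refine intervalIntegral.integral_congr fun c hc => ?_
    rw [uIcc_of_le one_le_two] at hc
    simp only [min_eq_right (show 2 - c ≤ c by linarith [hc.1])]
  rw [h1, h2, integral_mul_exp_neg_mul ha, integral_two_sub_mul_exp_neg_mul ha,
    show -(2 * a) = -a + -a by ring, Real.exp_add]
  field_simp
  ring

theorem lintegral_min_mul_inv_le :
    ∫⁻ c in Ioc (0 : ℝ) 2, ENNReal.ofReal (min c (2 - c) * c⁻¹)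
      ≤ ENNReal.ofReal (2 * Real.log 2) := by
  have hsplit : Ioc (0 : ℝ) 2 = Ioc 0 1 ∪ Ioc 1 2 :=
    (Ioc_union_Ioc_eq_Ioc zero_le_one one_le_two).symm
  have h1 : ∫⁻ c in Ioc (0 : ℝ) 1, ENNReal.ofReal (min c (2 - c) * c⁻¹) ≤ ENNReal.ofReal 1 := by
    calc _ ≤ ∫⁻ c in Ioc (0 : ℝ) 1, 1 := by
          refine setLIntegral_mono measurable_const fun c hc => ?_
          rw [← ENNReal.ofReal_one]
          refine ENNReal.ofReal_le_ofReal ?_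
          rw [← div_eq_mul_inv, div_le_one hc.1]
          exact min_le_left _ _
      _ = _ := by simp
  have hi : IntervalIntegrable (fun c : ℝ => 2 * c⁻¹ - 1) volume 1 2 := by
    refine ContinuousOn.intervalIntegrable ?_
    rw [uIcc_of_le one_le_two]
    exact (continuousOn_const.mul (continuousOn_id.inv₀ fun c hc =>
      (lt_of_lt_of_le one_pos (mem_Icc.1 hc).1).ne')).sub continuousOn_const
  have h2 : ∫⁻ c in Ioc (1 : ℝ) 2, ENNReal.ofReal (min c (2 - c) * c⁻¹)
      ≤ ENNReal.ofReal (2 * Real.log 2 - 1) := by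
    have hint : ∫ c in (1 : ℝ)..2, (2 * c⁻¹ - 1) = 2 * Real.log 2 - 1 := by
      rw [intervalIntegral.integral_sub _ (by simp), intervalIntegral.integral_const_mul,
        integral_inv_of_pos one_pos two_pos]
      · norm_num
      · simp
    rw [← hint, intervalIntegral.integral_of_le one_le_two, ofReal_integral_eq_lintegral_ofReal
      ((intervalIntegrable_iff_integrableOn_Ioc_of_le one_le_two).1 hi)]
    · refine setLIntegral_mono (by fun_prop) fun c hc => ENNReal.ofReal_le_ofReal ?_
      have hc0 : 0 < c := one_pos.trans hc.1
      calc min c (2 - c) * c⁻¹ ≤ (2 - c) * c⁻¹ := by gcongr; exact min_le_right _ _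
        _ = 2 * c⁻¹ - 1 := by field_simp
    · filter_upwards [ae_restrict_mem measurableSet_Ioc] with c hc
      have hc0 : 0 < c := one_pos.trans hc.1
      have : 0 ≤ (2 - c) * c⁻¹ := mul_nonneg (by linarith [hc.2]) (by positivity)
      have h3 : (2 - c) * c⁻¹ = 2 * c⁻¹ - 1 := by field_simp
      simpa [h3] using this
  have hlog : (1 : ℝ) / 2 ≤ Real.log 2 := by linarith [Real.log_two_gt_d9]
  calc _ ≤ _ := by rw [hsplit]; exact lintegral_union_le _ _ _
    _ ≤ ENNReal.ofReal 1 + ENNReal.ofReal (2 * Real.log 2 - 1) := add_le_add h1 h2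
    _ = _ := by rw [← ENNReal.ofReal_add zero_le_one (by linarith)]; congr 1; ring

theorem lintegral_exp_neg_mul_Ioi {b : ℝ} (hb : 0 < b) :
    ∫⁻ s in Ioi (0 : ℝ), ENNReal.ofReal (Real.exp (-(b * s))) = ENNReal.ofReal b⁻¹ := by
  have hb' : -b < 0 := by linarith
  have h := integral_exp_mul_Ioi hb' 0
  simp only [neg_mul] at h
  rw [← ofReal_integral_eq_lintegral_ofReal, h]
  · simp [neg_div_neg_eq]
  · have := integrableOn_exp_mul_Ioi hb' 0
    simp only [neg_mul] at this
    exact this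
  · exact Filter.Eventually.of_forall fun s => (Real.exp_pos _).le

theorem lintegral_one_sub_exp_sq_div_sq_le {a : ℝ} (ha : 0 < a) :
    ∫⁻ s in Ioi (0 : ℝ), ENNReal.ofReal ((1 - Real.exp (-(s * a))) ^ 2 / s ^ 2)
      ≤ ENNReal.ofReal (2 * a * Real.log 2) := by
  calc _ = ∫⁻ s in Ioi (0 : ℝ), ∫⁻ c in Ioc (0 : ℝ) 2,
        ENNReal.ofReal (a ^ 2 * min c (2 - c)) * ENNReal.ofReal (Real.exp (-(a * c * s))) := by
        refine setLIntegral_congr_fun measurableSet_Ioi fun s hs => ?_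
        have hs : 0 < s := hs
        have h1 := integral_min_mul_exp_neg_mul (mul_pos hs ha)
        have h2 : (1 - Real.exp (-(s * a))) ^ 2 / s ^ 2
            = a ^ 2 * ∫ c in (0 : ℝ)..2, min c (2 - c) * Real.exp (-(s * a * c)) := by
          rw [h1]
          field_simp
        have hnn : ∀ c ∈ Ioc (0 : ℝ) 2, 0 ≤ a ^ 2 * min c (2 - c) := fun c hc =>
          mul_nonneg (by positivity) (le_min hc.1.le (by linarith [hc.2]))
        rw [h2, ← intervalIntegral.integral_const_mul, intervalIntegral.integral_of_le zero_le_two,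
          ofReal_integral_eq_lintegral_ofReal]
        · refine setLIntegral_congr_fun measurableSet_Ioc fun c hc => ?_
          rw [← ENNReal.ofReal_mul (hnn c hc)]
          congr 1
          rw [show s * a * c = a * c * s by ring]
          ring
        · exact (Continuous.integrableOn_Icc (by fun_prop)).mono_set Ioc_subset_Icc_self
        · filter_upwards [ae_restrict_mem measurableSet_Ioc] with c hc
          have := mul_nonneg (hnn c hc) (Real.exp_pos (-(s * a * c))).le
          simpa [mul_assoc] using this
    _ = ∫⁻ c in Ioc (0 : ℝ) 2, ∫⁻ s in Ioi (0 : ℝ),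
        ENNReal.ofReal (a ^ 2 * min c (2 - c)) * ENNReal.ofReal (Real.exp (-(a * c * s))) :=
        lintegral_lintegral_swap (by fun_prop)
    _ = ∫⁻ c in Ioc (0 : ℝ) 2, ENNReal.ofReal a * ENNReal.ofReal (min c (2 - c) * c⁻¹) := by
        refine setLIntegral_congr_fun measurableSet_Ioc fun c hc => ?_
        have hm : 0 ≤ min c (2 - c) := le_min hc.1.le (by linarith [hc.2])
        rw [lintegral_const_mul' _ _ ENNReal.ofReal_ne_top,
          lintegral_exp_neg_mul_Ioi (mul_pos ha hc.1), ← ENNReal.ofReal_mul (by positivity),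
          ← ENNReal.ofReal_mul ha.le]
        congr 1
        have := hc.1.ne'
        field_simp
    _ ≤ ENNReal.ofReal a * ENNReal.ofReal (2 * Real.log 2) := by
        rw [lintegral_const_mul' _ _ ENNReal.ofReal_ne_top]
        gcongr
        exact lintegral_min_mul_inv_le
    _ = _ := by rw [← ENNReal.ofReal_mul ha.le]; congr 1; ring

theorem lintegral_inv_sq_Ioc {u v : ℝ} (hu : 0 < u) (huv : u ≤ v) :
    ∫⁻ s in Ioc u v, ENNReal.ofReal (1 / s ^ 2) = ENNReal.ofReal (1 / u - 1 / v) := by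
  have hne : ∀ s ∈ uIcc u v, s ≠ 0 := fun s hs => by
    rw [uIcc_of_le huv] at hs
    exact (hu.trans_le hs.1).ne'
  have hcont : IntervalIntegrable (fun s : ℝ => 1 / s ^ 2) volume u v :=
    ContinuousOn.intervalIntegrable <| continuousOn_const.div (continuousOn_id.pow 2)
      fun s hs => pow_ne_zero 2 (hne s hs)
  have hint : ∫ s in u..v, 1 / s ^ 2 = 1 / u - 1 / v := by
    have hd : ∀ s ∈ uIcc u v, HasDerivAt (fun s : ℝ => -s⁻¹) (1 / s ^ 2) s := fun s hs => by
      refine (hasDerivAt_inv (hne s hs)).neg.congr_deriv ?_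
      ring
    rw [intervalIntegral.integral_eq_sub_of_hasDerivAt hd hcont]
    ring
  rw [← hint, intervalIntegral.integral_of_le huv, ofReal_integral_eq_lintegral_ofReal
    ((intervalIntegrable_iff_integrableOn_Ioc_of_le huv).1 hcont)]
  exact Filter.Eventually.of_forall fun s => by positivity

/-- The lower Riemann sum of `∫ (1 - e^{-sa})² / s² ds` along a geometric grid. -/
theorem tsum_geometric_grid_le {r a : ℝ} (hr : 1 < r) (ha : 0 < a) :
    ∑' k : ℤ, ENNReal.ofReal (1 / r ^ k - 1 / r ^ (k + 1))
        * ENNReal.ofReal ((1 - Real.exp (-(r ^ k * a))) ^ 2)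
      ≤ ENNReal.ofReal (2 * a * Real.log 2) := by
  have hr0 : 0 < r := one_pos.trans hr
  have hmono : Monotone fun k : ℤ => r ^ k := (zpow_right_strictMono₀ hr).monotone
  refine le_trans ?_ (lintegral_one_sub_exp_sq_div_sq_le ha)
  calc _ ≤ ∑' k : ℤ, ∫⁻ s in Ioc (r ^ k) (r ^ (k + 1)),
        ENNReal.ofReal ((1 - Real.exp (-(s * a))) ^ 2 / s ^ 2) := by
        refine ENNReal.tsum_le_tsum fun k => ?_
        have hk : 0 < r ^ k := by positivity
        rw [← lintegral_inv_sq_Ioc hk (hmono (by lia)), ← lintegral_mul_const' _ _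
          ENNReal.ofReal_ne_top]
        refine setLIntegral_mono (by fun_prop) fun s hs => ?_
        rw [← ENNReal.ofReal_mul (by positivity)]
        refine ENNReal.ofReal_le_ofReal ?_
        rw [div_mul_eq_mul_div, one_mul]
        have h1 : Real.exp (-(s * a)) ≤ Real.exp (-(r ^ k * a)) := by
          gcongr
          exact hs.1.le
        have h2 : Real.exp (-(r ^ k * a)) ≤ 1 :=
          Real.exp_le_one_iff.2 (by have := mul_pos hk ha; linarith)
        gcongr
    _ = ∫⁻ s in ⋃ k : ℤ, Ioc (r ^ k) (r ^ (k + 1)),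
        ENNReal.ofReal ((1 - Real.exp (-(s * a))) ^ 2 / s ^ 2) :=
        (lintegral_iUnion (fun _ => measurableSet_Ioc)
          (hmono.pairwise_disjoint_on_Ioc_succ) _).symm
    _ ≤ _ := lintegral_mono_set <| iUnion_subset fun k s hs =>
        mem_Ioi.2 (lt_trans (by positivity) hs.1)

end Integral

section Lp

variable {μ : Measure X}

theorem ae_le_of_setIntegral_le {v : X → ℝ} (hv : Measurable v) (hv2 : MemLp v 2 μ) {c : ℝ}
    (hc : 0 ≤ c)
    (h : ∀ S, MeasurableSet S → μ S ≠ ⊤ → ∫ x in S, v x ∂μ ≤ c * μ.real S) :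
    ∀ᵐ x ∂μ, v x ≤ c := by
  have key : ∀ n : ℕ, ∀ᵐ x ∂μ, v x < c + 1 / ((n : ℝ) + 1) := by
    intro n
    set d : ℝ := c + 1 / ((n : ℝ) + 1) with hd
    have hcd : c < d := by
      have : (0 : ℝ) < 1 / ((n : ℝ) + 1) := by positivity
      linarith
    have hd0 : 0 < d := hc.trans_lt hcd
    set S := {x | d ≤ v x} with hS
    have hSm : MeasurableSet S := measurableSet_le measurable_const hv
    have hSfin : μ S ≠ ⊤ := by
      refine ((measure_mono fun x hx => ?_).trans_lt
        (hv2.meas_ge_lt_top two_ne_zero ENNReal.ofNat_ne_top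
          (ε := d.toNNReal) (by simpa using hd0))).ne
      have hx' : d ≤ v x := hx
      rw [mem_ofPred_eq, ← NNReal.coe_le_coe, Real.coe_toNNReal _ hd0.le, coe_nnnorm]
      exact hx'.trans (le_abs_self _)
    have hint : IntegrableOn v S μ := by
      have : IsFiniteMeasure (μ.restrict S) := ⟨by simpa using hSfin.lt_top⟩
      exact (hv2.restrict S).integrable one_le_two
    have h1 : d * μ.real S ≤ ∫ x in S, v x ∂μ :=
      setIntegral_ge_of_const_le_real hSm hSfin (fun x hx => hx) hint
    have h2 := h S hSm hSfin
    have h3 : μ.real S = 0 := by nlinarith [measureReal_nonneg (μ := μ) (s := S)]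
    have h4 : μ S = 0 := (measureReal_eq_zero_iff hSfin).1 h3
    rw [ae_iff]
    simpa [not_lt] using h4
  filter_upwards [ae_all_iff.2 key] with x hx
  refine le_of_forall_pos_le_add fun ε hε => ?_
  obtain ⟨n, hn⟩ := exists_nat_one_div_lt hε
  linarith [hx n]

theorem Lp_ae_abs_le_of_setIntegral_le {u : Lp ℝ 2 μ} {c : ℝ} (hc : 0 ≤ c)
    (h : ∀ S, MeasurableSet S → μ S ≠ ⊤ → |∫ x in S, u x ∂μ| ≤ c * μ.real S) :
    ∀ᵐ x ∂μ, |u x| ≤ c := by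
  have hm : Measurable u := (Lp.stronglyMeasurable u).measurable
  have h1 := ae_le_of_setIntegral_le hm (Lp.memLp u) hc fun S hS hSf =>
    (le_abs_self _).trans (h S hS hSf)
  have h2 := ae_le_of_setIntegral_le hm.neg (Lp.memLp u).neg hc fun S hS hSf => by
    simp only [Pi.neg_apply, integral_neg]
    exact (neg_le_abs _).trans (h S hS hSf)
  filter_upwards [h1, h2] with x hx1 hx2
  exact abs_le'.2 ⟨hx1, hx2⟩

theorem inner_map_indicator_le {B : Lp ℝ 2 μ →L[ℝ] Lp ℝ 2 μ} {Λ : ℝ} (hΛ : 0 ≤ Λ)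
    (hB : opNorm1infty μ B ≤ ENNReal.ofReal Λ) {S : Set X} (hS : MeasurableSet S)
    (hSf : μ S ≠ ⊤) :
    ⟪B (indicatorConstLp 2 hS hSf 1), indicatorConstLp 2 hS hSf (1 : ℝ)⟫_ℝ
      ≤ Λ * μ.real S ^ 2 := by
  set h : Lp ℝ 2 μ := indicatorConstLp 2 hS hSf (1 : ℝ) with hh
  set m := μ.real S with hm
  have hm0 : 0 ≤ m := measureReal_nonneg
  rw [real_inner_comm, hh, L2.inner_indicatorConstLp_one, ← hh]
  rcases hm0.eq_or_lt with hm1 | hm1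
  · have : μ S = 0 := (measureReal_eq_zero_iff hSf).1 hm1.symm
    rw [Measure.restrict_zero_set this, integral_zero_measure, ← hm1]
    simp
  have hnorm : eLpNorm (m⁻¹ • h : Lp ℝ 2 μ) 1 μ ≤ 1 := by
    rw [eLpNorm_congr_ae (Lp.coeFn_smul m⁻¹ h), eLpNorm_const_smul,
      eLpNorm_congr_ae (indicatorConstLp_coeFn), eLpNorm_indicator_const hS one_ne_zero
        ENNReal.one_ne_top]
    have h2 : μ S = ENNReal.ofReal m := (ofReal_measureReal hSf).symm
    rw [h2, Real.enorm_eq_ofReal (by positivity)]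
    simp only [enorm_one, ENNReal.toReal_one, div_one, ENNReal.rpow_one, one_mul]
    rw [← ENNReal.ofReal_mul (by positivity), inv_mul_cancel₀ hm1.ne', ENNReal.ofReal_one]
  have hsup : eLpNorm (B (m⁻¹ • h)) ⊤ μ ≤ ENNReal.ofReal Λ :=
    (le_iSup₂_of_le (f := fun (f : Lp ℝ 2 μ) (_ : eLpNorm (⇑f) 1 μ ≤ 1) => eLpNorm (⇑(B f)) ⊤ μ)
      (m⁻¹ • h) hnorm le_rfl).trans hB
  rw [eLpNorm_exponent_top] at hsup
  have hBh : B h = m • B (m⁻¹ • h) := by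
    rw [← map_smul, smul_smul, mul_inv_cancel₀ hm1.ne', one_smul]
  have hae : ∀ᵐ x ∂μ, B h x ≤ m * Λ := by
    rw [hBh]
    filter_upwards [Lp.coeFn_smul m (B (m⁻¹ • h)),
      ae_le_eLpNormEssSup (f := (B (m⁻¹ • h) : X → ℝ)) (μ := μ)] with x hx1 hx2
    rw [hx1, Pi.smul_apply, smul_eq_mul]
    gcongr
    have h3 := hx2.trans hsup
    rw [Real.enorm_eq_ofReal_abs, ENNReal.ofReal_le_ofReal_iff hΛ] at h3
    exact (le_abs_self _).trans h3
  calc ∫ x in S, B h x ∂μ ≤ ∫ _ in S, m * Λ ∂μ := by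
        refine setIntegral_mono_ae (integrableOn_Lp_of_measure_ne_top _ (by norm_num) hSf)
          (integrableOn_const hSf) hae
    _ = Λ * m ^ 2 := by
        rw [setIntegral_const, smul_eq_mul, ← hm]
        ring

theorem lintegral_ofReal_sq_eq (g : Lp ℝ 2 μ) :
    ∫⁻ x, ENNReal.ofReal (g x ^ 2) ∂μ = ENNReal.ofReal (‖g‖ ^ 2) := by
  rw [← real_inner_self_eq_norm_sq, L2.inner_def, ← ofReal_integral_eq_lintegral_ofReal
    (Lp.memLp g).integrable_sq (Filter.Eventually.of_forall fun x => sq_nonneg _)]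
  simp [pow_two]

end Lp

section Laplace

variable {ρ : Measure ℝ}

theorem integrable_exp_neg_mul [IsFiniteMeasure ρ] (h0 : ∀ᵐ x ∂ρ, 0 < x) {t : ℝ} (ht : 0 < t) :
    Integrable (fun x => Real.exp (-t * x)) ρ := by
  refine Integrable.of_bound (by fun_prop) 1 ?_
  filter_upwards [h0] with x hx
  rw [Real.norm_eq_abs, abs_of_pos (Real.exp_pos _), Real.exp_le_one_iff]
  nlinarith

theorem eq_integral_of_ofReal_eq_lintegral [IsFiniteMeasure ρ] (h0 : ∀ᵐ x ∂ρ, 0 < x) {t p : ℝ}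
    (ht : 0 < t) (hp : 0 ≤ p)
    (h : ENNReal.ofReal p = ∫⁻ x, ENNReal.ofReal (Real.exp (-t * x)) ∂ρ) :
    p = ∫ x, Real.exp (-t * x) ∂ρ := by
  have hpos : 0 ≤ ∫ x, Real.exp (-t * x) ∂ρ := integral_nonneg fun x => (Real.exp_pos _).le
  rw [← ofReal_integral_eq_lintegral_ofReal (integrable_exp_neg_mul h0 ht)
    (Filter.Eventually.of_forall fun x => (Real.exp_pos _).le),
    ENNReal.ofReal_eq_ofReal_iff hp hpos] at h
  exact h

end Laplace

section Spectral

variable {H : Type*} [NormedAddCommGroup H] [InnerProductSpace ℝ H] {T : ℝ → H →L[ℝ] H}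
  {ν : H → Measure ℝ}

theorem antitoneOn_inner_map_self (hsemi : ∀ s t, 0 < s → 0 < t → T s ∘L T t = T (s + t))
    (hsymm : ∀ t f g, ⟪T t f, g⟫_ℝ = ⟪f, T t g⟫_ℝ) (hν0 : ∀ g, ∀ᵐ x ∂(ν g), 0 < x)
    (hν : ∀ g, ∀ t > (0 : ℝ), ENNReal.ofReal ⟪T t g, g⟫_ℝ
      = ∫⁻ x, ENNReal.ofReal (Real.exp (-t * x)) ∂(ν g)) (g : H) :
    AntitoneOn (fun t => ⟪T t g, g⟫_ℝ) (Ioi 0) := by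
  intro s hs t ht hst
  rw [← ENNReal.ofReal_le_ofReal_iff (inner_map_self_nonneg hsemi hsymm hs g), hν g t ht,
    hν g s hs]
  refine lintegral_mono_ae ?_
  filter_upwards [hν0 g] with x hx
  gcongr

theorem inner_map_self_eq_integral (hsemi : ∀ s t, 0 < s → 0 < t → T s ∘L T t = T (s + t))
    (hsymm : ∀ t f g, ⟪T t f, g⟫_ℝ = ⟪f, T t g⟫_ℝ) (hν0 : ∀ g, ∀ᵐ x ∂(ν g), 0 < x)
    (hν : ∀ g, ∀ t > (0 : ℝ), ENNReal.ofReal ⟪T t g, g⟫_ℝ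
      = ∫⁻ x, ENNReal.ofReal (Real.exp (-t * x)) ∂(ν g)) (f : H) [IsFiniteMeasure (ν f)]
    {t : ℝ} (ht : 0 < t) :
    ⟪T t f, f⟫_ℝ = ∫ x, Real.exp (-t * x) ∂(ν f) :=
  eq_integral_of_ofReal_eq_lintegral (hν0 f) ht (inner_map_self_nonneg hsemi hsymm ht f)
    (hν f t ht)

theorem inner_sub_map_le_mul_energy (hsemi : ∀ s t, 0 < s → 0 < t → T s ∘L T t = T (s + t))
    (hsymm : ∀ t f g, ⟪T t f, g⟫_ℝ = ⟪f, T t g⟫_ℝ) (hν0 : ∀ g, ∀ᵐ x ∂(ν g), 0 < x)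
    (hν : ∀ g, ∀ t > (0 : ℝ), ENNReal.ofReal ⟪T t g, g⟫_ℝ
      = ∫⁻ x, ENNReal.ofReal (Real.exp (-t * x)) ∂(ν g)) {f : H} [IsFiniteMeasure (ν f)]
    (hfV : (ν f).real univ = ‖f‖ ^ 2) (hE : Integrable (fun x => x) (ν f)) {ε : ℝ} (hε : 0 < ε) :
    ⟪f, f - T ε f⟫_ℝ ≤ ε * ∫ x, x ∂(ν f) := by
  have h1 : ‖f‖ ^ 2 = ∫ _, (1 : ℝ) ∂(ν f) := by simp [hfV]
  rw [inner_sub_right, real_inner_self_eq_norm_sq, ← hsymm,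
    inner_map_self_eq_integral hsemi hsymm hν0 hν f hε, h1,
    ← integral_sub (integrable_const _) (integrable_exp_neg_mul (hν0 f) hε),
    ← integral_const_mul]
  refine integral_mono ((integrable_const _).sub (integrable_exp_neg_mul (hν0 f) hε))
    (hE.const_mul ε) fun x => ?_
  have := Real.add_one_le_exp (-ε * x)
  simp only
  linarith

theorem ofReal_norm_sub_map_sq (hsemi : ∀ s t, 0 < s → 0 < t → T s ∘L T t = T (s + t))
    (hsymm : ∀ t f g, ⟪T t f, g⟫_ℝ = ⟪f, T t g⟫_ℝ) (hν0 : ∀ g, ∀ᵐ x ∂(ν g), 0 < x)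
    (hν : ∀ g, ∀ t > (0 : ℝ), ENNReal.ofReal ⟪T t g, g⟫_ℝ
      = ∫⁻ x, ENNReal.ofReal (Real.exp (-t * x)) ∂(ν g)) {f : H} [IsFiniteMeasure (ν f)]
    (hfV : (ν f).real univ = ‖f‖ ^ 2) {t : ℝ} (ht : 0 < t) :
    ENNReal.ofReal (‖f - T t f‖ ^ 2)
      = ∫⁻ x, ENNReal.ofReal ((1 - Real.exp (-t * x)) ^ 2) ∂(ν f) := by
  have h1 : ‖f‖ ^ 2 = ∫ _, (1 : ℝ) ∂(ν f) := by simp [hfV]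
  have htt : 0 < t + t := add_pos ht ht
  have i1 := integrable_exp_neg_mul (hν0 f) ht
  have i2 := integrable_exp_neg_mul (hν0 f) htt
  have hexp : (fun x => (1 - Real.exp (-t * x)) ^ 2)
      = fun x => 1 - 2 * Real.exp (-t * x) + Real.exp (-(t + t) * x) := by
    funext x
    rw [show -(t + t) * x = -t * x + -t * x by ring, Real.exp_add]
    ring
  have hint : Integrable (fun x => (1 - Real.exp (-t * x)) ^ 2) (ν f) := by
    rw [hexp]
    exact ((integrable_const _).sub (i1.const_mul 2)).add i2
  rw [← ofReal_integral_eq_lintegral_ofReal hint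
    (Filter.Eventually.of_forall fun x => sq_nonneg _), hexp,
    integral_add (f := fun x => 1 - 2 * Real.exp (-t * x))
      ((integrable_const _).sub (i1.const_mul 2)) i2,
    integral_sub (integrable_const _) (i1.const_mul 2), integral_const_mul, ← h1,
    ← inner_map_self_eq_integral hsemi hsymm hν0 hν f ht,
    ← inner_map_self_eq_integral hsemi hsymm hν0 hν f htt, norm_sub_sq_real,
    norm_map_sq hsemi hsymm ht, hsymm t f f]

theorem tsum_ofReal_norm_sub_map_sq_le
    (hsemi : ∀ s t, 0 < s → 0 < t → T s ∘L T t = T (s + t))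
    (hsymm : ∀ t f g, ⟪T t f, g⟫_ℝ = ⟪f, T t g⟫_ℝ) (hν0 : ∀ g, ∀ᵐ x ∂(ν g), 0 < x)
    (hν : ∀ g, ∀ t > (0 : ℝ), ENNReal.ofReal ⟪T t g, g⟫_ℝ
      = ∫⁻ x, ENNReal.ofReal (Real.exp (-t * x)) ∂(ν g)) {f : H} [IsFiniteMeasure (ν f)]
    (hfV : (ν f).real univ = ‖f‖ ^ 2) (hE : Integrable (fun x => x) (ν f)) {r : ℝ} (hr : 1 < r) :
    ∑' k : ℤ, ENNReal.ofReal (1 / r ^ k - 1 / r ^ (k + 1))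
        * ENNReal.ofReal (‖f - T (r ^ k / 2) f‖ ^ 2)
      ≤ ENNReal.ofReal ((∫ x, x ∂(ν f)) * Real.log 2) := by
  have hr0 : 0 < r := one_pos.trans hr
  calc _ = ∑' k : ℤ, ∫⁻ x, ENNReal.ofReal (1 / r ^ k - 1 / r ^ (k + 1))
        * ENNReal.ofReal ((1 - Real.exp (-(r ^ k * (x / 2)))) ^ 2) ∂(ν f) := by
        refine tsum_congr fun k => ?_
        rw [lintegral_const_mul' _ _ ENNReal.ofReal_ne_top,
          ofReal_norm_sub_map_sq hsemi hsymm hν0 hν hfV (by positivity)]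
        congr 2
        funext x
        congr 5
        ring
    _ = ∫⁻ x, ∑' k : ℤ, ENNReal.ofReal (1 / r ^ k - 1 / r ^ (k + 1))
        * ENNReal.ofReal ((1 - Real.exp (-(r ^ k * (x / 2)))) ^ 2) ∂(ν f) :=
        (lintegral_tsum fun k => by fun_prop).symm
    _ ≤ ∫⁻ x, ENNReal.ofReal (x * Real.log 2) ∂(ν f) := by
        refine lintegral_mono_ae ?_
        filter_upwards [hν0 f] with x hx
        have := tsum_geometric_grid_le hr (half_pos hx)
        rwa [mul_div_cancel₀ x two_ne_zero] at this
    _ = _ := by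
        rw [← integral_mul_const, ofReal_integral_eq_lintegral_ofReal (hE.mul_const _)]
        filter_upwards [hν0 f] with x hx
        exact mul_nonneg hx.le (Real.log_nonneg one_le_two)

end Spectral

theorem ofReal_inv_zpow_eq_tsum {r : ℝ} (hr : 1 < r) (n : ℤ) :
    ENNReal.ofReal (1 / r ^ n)
      = ∑' j : ℕ, ENNReal.ofReal (1 / r ^ (n + j) - 1 / r ^ (n + j + 1)) := by
  have hr0 : 0 < r := one_pos.trans hr
  have hterm : ∀ j : ℕ, 1 / r ^ (n + j) - 1 / r ^ (n + j + 1)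
      = 1 / r ^ n * (1 - r⁻¹) * r⁻¹ ^ j := by
    intro j
    rw [zpow_add_one₀ hr0.ne', zpow_add₀ hr0.ne', zpow_natCast, inv_pow]
    field_simp
  have hinv : r⁻¹ < 1 := inv_lt_one_of_one_lt₀ hr
  simp only [hterm]
  rw [← ENNReal.ofReal_tsum_of_nonneg, tsum_mul_left,
    tsum_geometric_of_lt_one (by positivity) hinv]
  · rw [mul_assoc, mul_inv_cancel₀ (by linarith), mul_one]
  · intro j
    have : 0 ≤ 1 - r⁻¹ := by linarith
    positivity
  · exact (summable_geometric_of_lt_one (by positivity) hinv).mul_left _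

theorem ofReal_div_le_tsum_of_sq_le {r m E F : ℝ} (hr : 1 < r) (hm : 0 < m) (hE : 0 < E)
    {g : ℤ → ℝ} (hg : ∀ k, m < r ^ k → F ^ 2 ≤ 4 * g k ^ 2) :
    ENNReal.ofReal (F ^ 2 / (4 * E) / m) ≤ ENNReal.ofReal (r / E)
      * ∑' k : ℤ, ENNReal.ofReal (1 / r ^ k - 1 / r ^ (k + 1)) * ENNReal.ofReal (g k ^ 2) := by
  have hr0 : 0 < r := one_pos.trans hr
  obtain ⟨n, hn1, hn2⟩ := exists_mem_Ico_zpow hm hr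
  have hmr : r ^ (n + 1) ≤ r * m := by
    rw [zpow_add_one₀ hr0.ne', mul_comm]
    gcongr
  have hle : F ^ 2 / (4 * E) / m ≤ r / E * (F ^ 2 / 4 * (1 / r ^ (n + 1))) := by
    have h1 : 1 / m ≤ r * (1 / r ^ (n + 1)) := by
      rw [mul_one_div, div_le_div_iff₀ hm (by positivity)]
      linarith
    calc F ^ 2 / (4 * E) / m = F ^ 2 / (4 * E) * (1 / m) := by ring
      _ ≤ F ^ 2 / (4 * E) * (r * (1 / r ^ (n + 1))) := by gcongr
      _ = _ := by field_simp
  refine (ENNReal.ofReal_le_ofReal hle).trans ?_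
  rw [ENNReal.ofReal_mul (by positivity)]
  gcongr
  rw [ENNReal.ofReal_mul (by positivity), ofReal_inv_zpow_eq_tsum hr, ← ENNReal.tsum_mul_left]
  refine le_trans (ENNReal.tsum_le_tsum fun j => ?_)
    (ENNReal.tsum_comp_le_tsum_of_injective (f := fun j : ℕ => n + 1 + (j : ℤ))
      (fun i j hij => by simpa using hij) _)
  rw [mul_comm]
  gcongr
  have hk := hg (n + 1 + j) (hn2.trans_le (zpow_le_zpow_right₀ hr.le (by lia)))
  linarith

theorem sq_le_four_mul_sq_sub {a b c : ℝ} (hb : b ^ 2 ≤ c) (ha : 4 * c ≤ a ^ 2) :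
    a ^ 2 ≤ 4 * (a - b) ^ 2 := by
  have h1 : |2 * b| ≤ |a| := sq_le_sq.1 (by linarith)
  have h2 : |a| ≤ |2 * (a - b)| := by
    have h3 := abs_sub_abs_le_abs_sub (2 * a) (2 * b)
    rw [← mul_sub, abs_mul 2 a, abs_two] at h3
    linarith
  have := sq_le_sq.2 h2
  linarith

/-- The heat-kernel Sobolev–Orlicz inequality (Theorem 1.2).  The positive
self-adjoint operator `A` restricted to `V = (ker A)^⊥` is encoded by the heat
semigroup `T t = e^{-tA} Π_V` and the spectral measures `ν g` of states `g`,
supported in `(0,∞)`, with `⟨T t g, g⟩ = ∫ e^{-tx} dν_g(x)` and energy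
`E(g) = ∫ x dν_g(x)`.  Given `L(t) = ‖e^{-tA}Π_V‖_{1,∞}` finite and
`M(t) = ∫_t^∞ L(u) du < ∞`, every nonzero `f ∈ V` (full spectral mass
`ν f (ℝ) = ‖f‖²`) of finite energy satisfies
`∫_X N(|f(x)|²/(4E(f))) dμ ≤ ln 2`, where `N(y) = y / M⁻¹(y)` with
`M⁻¹(y) = inf {t | M t ≤ y}`. -/
theorem stmt_8 (μ : Measure X)
    (T : ℝ → (Lp ℝ 2 μ →L[ℝ] Lp ℝ 2 μ))
    (hsemi : ∀ s t, 0 < s → 0 < t → T s ∘L T t = T (s + t))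
    (hsymmT : ∀ t f g, ⟪T t f, g⟫_ℝ = ⟪f, T t g⟫_ℝ)
    (ν : Lp ℝ 2 μ → Measure ℝ)
    (hν0 : ∀ g, ν g (Set.Iic 0) = 0)
    (hν : ∀ g, ∀ t > (0 : ℝ), ENNReal.ofReal ⟪T t g, g⟫_ℝ
      = ∫⁻ x, ENNReal.ofReal (Real.exp (-t * x)) ∂(ν g))
    (L M : ℝ → ℝ)
    (hL : ∀ t > (0 : ℝ), opNorm1infty μ (T t) = ENNReal.ofReal (L t))
    (hLint : ∀ t > (0 : ℝ), IntegrableOn L (Set.Ioi t))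
    (hM : ∀ t > (0 : ℝ), M t = ∫ s in Set.Ioi t, L s)
    (Minv N : ℝ → ℝ)
    (hMinv : ∀ y, Minv y = sInf {t | 0 < t ∧ M t ≤ y})
    (hN : ∀ y, N y = y / Minv y)
    (f : Lp ℝ 2 μ) (hf : f ≠ 0)
    (hfV : ν f Set.univ = ENNReal.ofReal (‖f‖ ^ 2))
    (E : ℝ) (hEfin : Integrable (fun x => x) (ν f)) (hE : E = ∫ x, x ∂(ν f)) :
    ∫⁻ x, ENNReal.ofReal (N ((f : X → ℝ) x ^ 2 / (4 * E))) ∂μ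
      ≤ ENNReal.ofReal (Real.log 2) := by
  have hpos : ∀ g, ∀ᵐ x ∂(ν g), 0 < x := fun g => by
    rw [ae_iff]
    simp only [not_lt]
    exact hν0 g
  have hfin : IsFiniteMeasure (ν f) := ⟨by rw [hfV]; exact ENNReal.ofReal_lt_top⟩
  have hfV' : (ν f).real univ = ‖f‖ ^ 2 := by
    rw [measureReal_def, hfV, ENNReal.toReal_ofReal (by positivity)]
  have hanti := antitoneOn_inner_map_self hsemi hsymmT hpos hν
  have hνf : ν f ≠ 0 := by
    intro h0
    rw [h0] at hfV'
    simp only [measureReal_zero, Pi.zero_apply] at hfV'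
    exact hf (norm_eq_zero.1 (pow_eq_zero_iff two_ne_zero |>.1 hfV'.symm))
  have hE0 : 0 < E := by
    rw [hE]
    refine (integral_pos_iff_support_of_nonneg_ae ((hpos f).mono fun x hx => hx.le) hEfin).2 ?_
    rw [pos_iff_ne_zero]
    intro h0
    refine hνf (Measure.measure_univ_eq_zero.1 ?_)
    refine le_antisymm ?_ zero_le
    calc ν f univ ≤ ν f (Iic 0 ∪ Function.support fun x : ℝ => x) := by
          refine measure_mono fun x _ => ?_
          rcases eq_or_ne x 0 with h | h
          · exact Or.inl (by simp [h])
          · exact Or.inr h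
      _ ≤ ν f (Iic 0) + ν f (Function.support fun x : ℝ => x) := measure_union_le _ _
      _ = 0 := by rw [hν0, h0, add_zero]
  have hTf : ∀ t, 0 < t → T t f ≠ 0 := by
    intro t ht h0
    have h1 := hν f t ht
    rw [h0, inner_zero_left, ENNReal.ofReal_zero, eq_comm, lintegral_eq_zero_iff (by fun_prop)]
      at h1
    have h2 : ∀ᵐ _ ∂(ν f), False := by
      filter_upwards [h1] with x hx
      have := ENNReal.ofReal_pos.2 (Real.exp_pos (-t * x))
      exact this.ne' hx
    exact hνf (by simpa using h2)
  have hinner : ∀ t (S : Set X) (hS : MeasurableSet S) (hSf : μ S ≠ ⊤),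
      ∫ x in S, T t f x ∂μ = ⟪f, T t (indicatorConstLp 2 hS hSf 1)⟫_ℝ := by
    intro t S hS hSf
    rw [← hsymmT, real_inner_comm, L2.inner_indicatorConstLp_one]
  have hLpos : ∀ t, 0 < t → 0 < L t := by
    intro t ht
    by_contra! hneg
    have hzero : opNorm1infty μ (T t) ≤ ENNReal.ofReal 0 := by
      rw [hL t ht, ENNReal.ofReal_of_nonpos hneg]
      simp
    refine hTf (t + t) (add_pos ht ht) ?_
    have h1 : ∀ S, MeasurableSet S → μ S ≠ ⊤ → |∫ x in S, T (t + t) f x ∂μ| ≤ 0 * μ.real S := by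
      intro S hS hSf
      have h2 := inner_map_indicator_le le_rfl hzero hS hSf
      set h : Lp ℝ 2 μ := indicatorConstLp 2 hS hSf 1 with hh
      have h3 : ‖T (t + t) h‖ ^ 2 ≤ 0 := by
        rw [norm_map_sq hsemi hsymmT (add_pos ht ht)]
        have h4 : ⟪T (t + t + (t + t)) h, h⟫_ℝ ≤ ⟪T t h, h⟫_ℝ :=
          hanti h (mem_Ioi.2 ht) (mem_Ioi.2 (by linarith)) (by linarith)
        linarith
      have h5 : T (t + t) h = 0 := by
        have : ‖T (t + t) h‖ = 0 := by nlinarith [norm_nonneg (T (t + t) h)]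
        exact norm_eq_zero.1 this
      rw [hinner _ _ hS hSf, ← hh, h5]
      simp
    have h6 := Lp_ae_abs_le_of_setIntegral_le le_rfl h1
    refine (Lp.eq_zero_iff_ae_eq_zero).2 ?_
    filter_upwards [h6] with x hx
    exact abs_nonpos_iff.1 hx
  have hM0 : ∀ t, 0 < t → 0 ≤ M t := fun t ht => by
    rw [hM t ht]
    exact setIntegral_nonneg measurableSet_Ioi fun s hs => (hLpos s (ht.trans hs)).le
  have hManti : ∀ s t, 0 < s → s ≤ t → M t ≤ M s := fun s t hs hst => by
    rw [hM t (hs.trans_le hst), hM s hs]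
    refine setIntegral_mono_set (hLint s hs) ?_ (Ioi_subset_Ioi hst).eventuallyLE
    filter_upwards [ae_restrict_mem measurableSet_Ioi] with x hx
    exact (hLpos x (hs.trans hx)).le
  have hbound : ∀ t, 0 < t → ∀ᵐ x ∂μ, (T (t / 2) f x) ^ 2 ≤ E * M t := by
    intro t ht
    have hEM : 0 ≤ E * M t := mul_nonneg hE0.le (hM0 t ht)
    have h1 := Lp_ae_abs_le_of_setIntegral_le (u := T (t / 2) f) (Real.sqrt_nonneg (E * M t))
      fun S hS hSf => by
        rw [hinner _ _ hS hSf]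
        set h : Lp ℝ 2 μ := indicatorConstLp 2 hS hSf 1 with hh
        have h2 := inner_map_sq_le_energy_mul_integral hsemi hsymmT hanti (f := f) (h := h) hE0.le
          (fun ε hε => by
            rw [hE]
            exact inner_sub_map_le_mul_energy hsemi hsymmT hpos hν hfV' hEfin hε)
          (Λ := fun s => L s * μ.real S ^ 2)
          (fun s hs => inner_map_indicator_le (hLpos s hs).le (hL s hs).le hS hSf)
          (half_pos ht)
          ((hLint _ (mul_pos two_pos (half_pos ht))).mul_const _)
        rw [integral_mul_const, mul_div_cancel₀ t two_ne_zero, ← hM t ht, ← mul_assoc] at h2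
        refine abs_le_of_sq_le_sq ?_ (by positivity)
        rwa [mul_pow, Real.sq_sqrt hEM]
    filter_upwards [h1] with x hx
    rw [← Real.sq_sqrt hEM]
    exact sq_le_sq.2 (hx.trans (le_abs_self _))
  have hmain : ∀ r : ℝ, 1 < r →
      ∫⁻ x, ENNReal.ofReal (N ((f : X → ℝ) x ^ 2 / (4 * E))) ∂μ
        ≤ ENNReal.ofReal (r * Real.log 2) := by
    intro r hr
    have hr0 : 0 < r := one_pos.trans hr
    have hk0 : ∀ k : ℤ, 0 < r ^ k := fun k => by positivity
    have hpt : ∀ᵐ x ∂μ, ENNReal.ofReal (N ((f : X → ℝ) x ^ 2 / (4 * E))) ≤ ENNReal.ofReal (r / E)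
        * ∑' k : ℤ, ENNReal.ofReal (1 / r ^ k - 1 / r ^ (k + 1))
          * ENNReal.ofReal ((f - T (r ^ k / 2) f : Lp ℝ 2 μ) x ^ 2) := by
      filter_upwards [ae_all_iff.2 fun k : ℤ => hbound (r ^ k) (hk0 k),
        ae_all_iff.2 fun k : ℤ => Lp.coeFn_sub f (T (r ^ k / 2) f)] with x hx1 hx2
      rw [hN]
      set y := (f : X → ℝ) x ^ 2 / (4 * E) with hy
      have hm0 : 0 ≤ Minv y := by
        rw [hMinv]
        exact Real.sInf_nonneg fun t ht => ht.1.le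
      rcases hm0.eq_or_lt with hm | hm
      · simp [← hm]
      · rw [hy]
        refine ofReal_div_le_tsum_of_sq_le hr hm hE0 fun k hk => ?_
        rw [hx2 k, Pi.sub_apply]
        refine sq_le_four_mul_sq_sub (hx1 k) ?_
        have hne : {t | 0 < t ∧ M t ≤ y}.Nonempty := by
          by_contra hem
          rw [not_nonempty_iff_eq_empty] at hem
          rw [hMinv, hem, Real.sInf_empty] at hm
          exact hm.false
        rw [hMinv] at hk
        obtain ⟨t, ⟨ht0, hty⟩, htk⟩ := exists_lt_of_csInf_lt hne hk
        have hle := (hManti t (r ^ k) ht0 htk.le).trans hty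
        rw [hy, le_div_iff₀ (by positivity)] at hle
        linarith
    calc _ ≤ _ := lintegral_mono_ae hpt
      _ = ENNReal.ofReal (r / E) * ∑' k : ℤ, ENNReal.ofReal (1 / r ^ k - 1 / r ^ (k + 1))
          * ENNReal.ofReal (‖f - T (r ^ k / 2) f‖ ^ 2) := by
          have hmeas : ∀ k : ℤ, Measurable fun x =>
              ENNReal.ofReal ((f - T (r ^ k / 2) f : Lp ℝ 2 μ) x ^ 2) := fun k =>
            ((Lp.stronglyMeasurable _).measurable.pow_const 2).ennreal_ofReal
          rw [lintegral_const_mul' _ _ ENNReal.ofReal_ne_top,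
            lintegral_tsum fun k => ((hmeas k).const_mul _).aemeasurable]
          congr 2
          funext k
          rw [lintegral_const_mul' _ _ ENNReal.ofReal_ne_top, lintegral_ofReal_sq_eq]
      _ ≤ ENNReal.ofReal (r / E) * ENNReal.ofReal (E * Real.log 2) := by
          gcongr
          rw [hE]
          exact tsum_ofReal_norm_sub_map_sq_le hsemi hsymmT hpos hν hfV' hEfin hr
      _ = _ := by
          rw [← ENNReal.ofReal_mul (by positivity)]
          congr 1
          field_simp
  have hlim : Filter.Tendsto (fun r : ℝ => ENNReal.ofReal (r * Real.log 2))
      (nhdsWithin 1 (Ioi 1)) (nhds (ENNReal.ofReal (Real.log 2))) := by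
    have : Continuous fun r : ℝ => ENNReal.ofReal (r * Real.log 2) :=
      ENNReal.continuous_ofReal.comp (by fun_prop)
    simpa using (this.tendsto 1).mono_left nhdsWithin_le_nhds
  exact ge_of_tendsto hlim (by filter_upwards [self_mem_nhdsWithin] with r hr using hmain r hr)
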